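/- Let θ ∈ [1/4, 1/2], ν ∈ (0, 1/θ), and γ = (R_θ(ν) − 1)/ν. Let M be a real N×N matrix and c ∈ ℝ with μ₂[M] ≤ c, and let Δt > 0 satisfy cΔt ≤ ν. Then I − θΔtM is invertible and the DIRK amplification matrix R_θ(ΔtM) = (I − θΔtM)^{−2}(I + (1−2θ)ΔtM + (1/2 − 2θ + θ²)(ΔtM)²) satisfies ‖R_θ(ΔtM)ⁿ‖₂ ≤ (1 + γ·Δt·c⁺)ⁿ ≤ e^{γT·c⁺} for every integer n ≥ 0 with nΔt ≤ T, where c⁺ = max(c, 0). -/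

import Mathlib

open Matrix

/-- The Euclidean (ℓ2) norm of a vector. -/
noncomputable def l2norm {n : Type*} [Fintype n] (v : n → ℝ) : ℝ :=
  Real.sqrt (∑ i, (v i)^2)

/-- The DIRK stability function, restricted to real arguments. -/
noncomputable def Rre (θ x : ℝ) : ℝ :=
  (1 + (1 - 2*θ)*x + (1/2 - 2*θ + θ^2)*x^2) / (1 - θ*x)^2

/-! Put `r = (1 - θx)⁻¹`, where `x` bounds the logarithmic norm of `A`. Strong monotonicity of
`1 - θA` says exactly that `(1 - θA)⁻¹ = (r/2)(1 + U)` with `‖U‖ ≤ 1`, and the scalar case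
`A = x` corresponds to `U = 1`. In partial fractions `R_θ(A)` is a quadratic polynomial in
`(1 - θA)⁻¹`, hence `θ²R_θ(A) = p(U)` for a real quadratic `p` with `p(1) = θ²R_θ(x)`. Although
`p` may have a negative constant term, `|p|` attains its maximum on the unit disc at `1`, and an
explicit sum of squares turns this into `‖p(U)‖ ≤ |p(1)|`. Finally `(R_θ(x) - 1)/x` is increasing
in `x`, which gives `‖R_θ(A)‖ ≤ R_θ(x) ≤ 1 + γx` for `0 ≤ x ≤ ν`. -/

section Contraction

open scoped RealInnerProductSpace

variable {E : Type*} [SeminormedAddCommGroup E] [InnerProductSpace ℝ E]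

/- On the unit circle the quadratic `p` with coefficients `p₀, p₁, p₂` satisfies
`p(1)² - |p(z)|² = (p₁(p₀ + p₂) + 4p₀p₂)|1 - z|² - p₀p₂|1 - z|⁴`. The first two terms on the right
come from this; the other three vanish when `U` is an isometry. -/
theorem sq_norm_sub_sq_norm_quadratic (U : E →ₗ[ℝ] E) (p₀ p₁ p₂ : ℝ) (v : E) :
    (p₀ + p₁ + p₂) ^ 2 * ‖v‖ ^ 2 - ‖p₀ • v + p₁ • U v + p₂ • U (U v)‖ ^ 2 =
      (p₁ * (p₀ + p₂) + 4 * p₀ * p₂) * ‖v - U v‖ ^ 2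
      + -(p₀ * p₂) * ‖(v - U v) - U (v - U v)‖ ^ 2
      + (‖p₁ • v + p₂ • U v‖ ^ 2 - ‖U (p₁ • v + p₂ • U v)‖ ^ 2)
      + -(p₀ * p₂) * (‖(2 : ℝ) • v - U v‖ ^ 2 - ‖U ((2 : ℝ) • v - U v)‖ ^ 2)
      + (p₁ * (p₀ + p₂) + 4 * p₀ * p₂ + p₂ ^ 2 - p₀ * p₂) * (‖v‖ ^ 2 - ‖U v‖ ^ 2) := by
  simp only [map_add, map_sub, map_smul, ← real_inner_self_eq_norm_sq, inner_add_left,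
    inner_add_right, inner_sub_left, inner_sub_right, real_inner_smul_left, real_inner_smul_right,
    real_inner_comm v, real_inner_comm (U v) (U (U v))]
  ring

theorem norm_quadratic_le_of_norm_le_one {U : E →L[ℝ] E} (hU : ‖U‖ ≤ 1) {p₀ p₁ p₂ : ℝ}
    (h₁ : 0 ≤ p₁) (h₂ : 0 ≤ p₂) (hp : 0 ≤ p₁ * (p₀ + p₂) + 4 * p₀ * p₂) :
    ‖p₀ • (1 : E →L[ℝ] E) + p₁ • U + p₂ • U ^ 2‖ ≤ |p₀ + p₁ + p₂| := by
  have hUle (w : E) : ‖U w‖ ≤ ‖w‖ := by simpa using U.le_of_opNorm_le hU w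
  refine ContinuousLinearMap.opNorm_le_bound _ (abs_nonneg _) fun v ↦ ?_
  suffices ‖p₀ • v + p₁ • U v + p₂ • U (U v)‖ ≤ |p₀ + p₁ + p₂| * ‖v‖ by simpa [pow_two] using this
  rcases le_total 0 p₀ with h₀ | h₀
  · calc ‖p₀ • v + p₁ • U v + p₂ • U (U v)‖
        ≤ p₀ * ‖v‖ + p₁ * ‖U v‖ + p₂ * ‖U (U v)‖ := by
          simpa only [norm_smul_of_nonneg, h₀, h₁, h₂] using
            norm_add₃_le (a := p₀ • v) (b := p₁ • U v) (c := p₂ • U (U v))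
      _ ≤ p₀ * ‖v‖ + p₁ * ‖v‖ + p₂ * ‖v‖ := by
          gcongr
          exacts [hUle v, (hUle (U v)).trans (hUle v)]
      _ = |p₀ + p₁ + p₂| * ‖v‖ := by rw [abs_of_nonneg (by positivity)]; ring
  · have hdefect (w : E) : 0 ≤ ‖w‖ ^ 2 - ‖U w‖ ^ 2 :=
      sub_nonneg.2 (pow_le_pow_left₀ (norm_nonneg _) (hUle w) 2)
    have h₀₂ : 0 ≤ -(p₀ * p₂) := neg_nonneg.2 (mul_nonpos_of_nonpos_of_nonneg h₀ h₂)
    have hlast : 0 ≤ p₁ * (p₀ + p₂) + 4 * p₀ * p₂ + p₂ ^ 2 - p₀ * p₂ := by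
      linarith [sq_nonneg p₂]
    refine le_of_sq_le_sq ?_ (by positivity)
    rw [mul_pow, sq_abs, ← sub_nonneg]
    have hsos := sq_norm_sub_sq_norm_quadratic (U : E →ₗ[ℝ] E) p₀ p₁ p₂ v
    simp only [ContinuousLinearMap.coe_coe] at hsos
    rw [hsos]
    have := hdefect (p₁ • v + p₂ • U v)
    have := mul_nonneg h₀₂ (hdefect ((2 : ℝ) • v - U v))
    have := mul_nonneg hlast (hdefect v)
    positivity

theorem norm_pow_le_pow_of_norm_le {A : E →L[ℝ] E} {q : ℝ} (hA : ‖A‖ ≤ q) (n : ℕ) :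
    ‖A ^ n‖ ≤ q ^ n := by
  rcases n.eq_zero_or_pos with rfl | hn
  · rw [pow_zero, pow_zero]
    exact ContinuousLinearMap.norm_id_le
  · exact (norm_pow_le' A hn).trans (pow_le_pow_left₀ (norm_nonneg _) hA n)

end Contraction

section LogNorm

open scoped RealInnerProductSpace

variable {E : Type*} [NormedAddCommGroup E] [InnerProductSpace ℝ E]

/-- The bound `μ₂[A] ≤ c` on the logarithmic norm of an operator on a real inner product space,
written without the maximum so that it also makes sense when the maximum is not attained. -/
def LogNormLE (A : E →L[ℝ] E) (c : ℝ) : Prop :=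
  ∀ v, ⟪A v, v⟫ ≤ c * ‖v‖ ^ 2

theorem LogNormLE.mono {A : E →L[ℝ] E} {c d : ℝ} (hA : LogNormLE A c) (hcd : c ≤ d) :
    LogNormLE A d :=
  fun v ↦ (hA v).trans (by gcongr)

theorem LogNormLE.smul {A : E →L[ℝ] E} {c t : ℝ} (hA : LogNormLE A c) (ht : 0 ≤ t) :
    LogNormLE (t • A) (t * c) := fun v ↦ by
  rw [_root_.smul_apply, real_inner_smul_left, mul_assoc]
  exact mul_le_mul_of_nonneg_left (hA v) ht

theorem LogNormLE.le_inner_one_sub_smul {A : E →L[ℝ] E} {x θ : ℝ} (hA : LogNormLE A x)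
    (hθ : 0 ≤ θ) (v : E) : (1 - θ * x) * ‖v‖ ^ 2 ≤ ⟪(1 - θ • A) v, v⟫ := by
  have := hA.smul hθ v
  simp only [_root_.sub_apply, one_apply_eq_self, inner_sub_left,
    real_inner_self_eq_norm_sq]
  linarith

theorem LogNormLE.isUnit_one_sub_smul [CompleteSpace E] {A : E →L[ℝ] E} {x θ : ℝ}
    (hA : LogNormLE A x) (hθ : 0 ≤ θ) (hθx : θ * x < 1) : IsUnit (1 - θ • A) := by
  refine ContinuousLinearMap.isUnit_of_forall_le_norm_inner_map _
    (c := ⟨1 - θ * x, sub_nonneg.2 hθx.le⟩) (sub_pos.2 hθx) fun v ↦ ?_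
  rw [mul_comm]
  exact (hA.le_inner_one_sub_smul hθ v).trans (le_abs_self _)

/- With `v = B y` the claim reads `‖2f y - B y‖ ≤ ‖B y‖`; expanding the square, this is
`f ‖y‖² ≤ ⟪B y, y⟫`. -/
theorem norm_smul_inverse_sub_one_le {B : E →L[ℝ] E} (hB : IsUnit B) {f : ℝ} (hf : 0 ≤ f)
    (hmono : ∀ y, f * ‖y‖ ^ 2 ≤ ⟪B y, y⟫) : ‖(2 * f) • Ring.inverse B - 1‖ ≤ 1 := by
  refine ContinuousLinearMap.opNorm_le_bound _ zero_le_one fun v ↦ ?_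
  set y := Ring.inverse B v
  have hv : B y = v := DFunLike.congr_fun (Ring.mul_inverse_cancel B hB) v
  suffices ‖(2 * f) • y - v‖ ≤ ‖v‖ by simpa using this
  refine le_of_sq_le_sq ?_ (norm_nonneg v)
  have hexpand : ‖(2 * f) • y - v‖ ^ 2 = ‖v‖ ^ 2 - 4 * f * (⟪v, y⟫ - f * ‖y‖ ^ 2) := by
    rw [norm_sub_sq_real, real_inner_smul_left, norm_smul, mul_pow, Real.norm_eq_abs, sq_abs,
      real_inner_comm]
    ring
  have := mul_nonneg hf (sub_nonneg.2 (hmono y))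
  rw [hv] at this
  linarith

end LogNorm

section Algebra

variable {𝒜 : Type*} [Ring 𝒜] [Algebra ℝ 𝒜]

/-- The DIRK stability function `R_θ` evaluated in a real algebra; the value is meaningful when
`1 - θa` is invertible, since otherwise `Ring.inverse` is `0`. -/
noncomputable def dirkStability (θ : ℝ) (a : 𝒜) : 𝒜 :=
  Ring.inverse (1 - θ • a) ^ 2 * (1 + (1 - 2 * θ) • a + (1 / 2 - 2 * θ + θ ^ 2) • a ^ 2)

/-- The polynomial in `w = (1 - θa)⁻¹` given by the partial fraction decomposition of
`θ²R_θ(a)`. -/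
noncomputable def dirkResolventPoly (θ : ℝ) (w : 𝒜) : 𝒜 :=
  (1 / 2 - 2 * θ + θ ^ 2) • 1 + (3 * θ - 1) • w + (1 / 2 - θ) • w ^ 2

/-- The constant coefficient of `dirkResolventPoly θ ((r / 2)(1 + u))` as a polynomial in `u`,
the Cayley transform variable. -/
noncomputable def cayleyCoeff₀ (θ r : ℝ) : ℝ :=
  1 / 2 - 2 * θ + θ ^ 2 + (3 * θ - 1) * (r / 2) + (1 / 2 - θ) * (r / 2) ^ 2

/-- The coefficient of `u` in `dirkResolventPoly θ ((r / 2)(1 + u))`. -/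
noncomputable def cayleyCoeff₁ (θ r : ℝ) : ℝ :=
  (3 * θ - 1) * (r / 2) + 2 * (1 / 2 - θ) * (r / 2) ^ 2

/-- The coefficient of `u²` in `dirkResolventPoly θ ((r / 2)(1 + u))`. -/
noncomputable def cayleyCoeff₂ (θ r : ℝ) : ℝ :=
  (1 / 2 - θ) * (r / 2) ^ 2

theorem map_dirkStability {ℬ : Type*} [Ring ℬ] [Algebra ℝ ℬ] (φ : 𝒜 →ₐ[ℝ] ℬ) {θ : ℝ} {a : 𝒜}
    (ha : IsUnit (1 - θ • a)) : φ (dirkStability θ a) = dirkStability θ (φ a) := by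
  have hinv : φ (Ring.inverse (1 - θ • a)) = Ring.inverse (1 - θ • φ a) := by
    have hφ : φ (1 - θ • a) = 1 - θ • φ a := by simp
    rw [← hφ]
    refine (ha.map φ).mul_left_cancel ?_
    rw [← map_mul, Ring.mul_inverse_cancel _ ha, Ring.mul_inverse_cancel _ (ha.map φ), map_one]
  simp [dirkStability, hinv]

theorem sq_smul_dirkStability {θ : ℝ} {a : 𝒜} (ha : IsUnit (1 - θ • a)) :
    θ ^ 2 • dirkStability θ a = dirkResolventPoly θ (Ring.inverse (1 - θ • a)) := by
  have hnum : θ ^ 2 • (1 + (1 - 2 * θ) • a + (1 / 2 - 2 * θ + θ ^ 2) • a ^ 2) =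
      (1 / 2 - 2 * θ + θ ^ 2) • (1 - θ • a) ^ 2 + (3 * θ - 1) • (1 - θ • a)
        + (1 / 2 - θ) • (1 : 𝒜) := by
    simp only [pow_two a, pow_two (1 - θ • a), mul_sub, sub_mul, mul_one, one_mul, smul_mul_assoc,
      mul_smul_comm]
    module
  have hcancel := Ring.inverse_mul_cancel _ ha
  rw [dirkStability, dirkResolventPoly, ← mul_smul_comm, hnum]
  generalize Ring.inverse (1 - θ • a) = w at hcancel ⊢
  have hlin : w ^ 2 * (1 - θ • a) = w := by rw [pow_two, mul_assoc, hcancel, mul_one]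
  have hsq : w ^ 2 * (1 - θ • a) ^ 2 = 1 := by rw [pow_two (1 - _), ← mul_assoc, hlin, hcancel]
  simp only [mul_add, mul_smul_comm, hlin, hsq, mul_one]

theorem dirkResolventPoly_smul_one_add (θ r : ℝ) (u : 𝒜) :
    dirkResolventPoly θ ((r / 2) • (1 + u)) =
      cayleyCoeff₀ θ r • 1 + cayleyCoeff₁ θ r • u + cayleyCoeff₂ θ r • u ^ 2 := by
  simp only [dirkResolventPoly, cayleyCoeff₀, cayleyCoeff₁, cayleyCoeff₂, pow_two, smul_add,
    mul_add, add_mul, mul_one, one_mul, smul_mul_assoc, mul_smul_comm]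
  module

end Algebra

section Scalar

/-- The difference quotient `(R_θ(x) - 1) / x`, continued to `x = 0`. -/
noncomputable def dirkSlope (θ x : ℝ) : ℝ :=
  (1 + (1 / 2 - 2 * θ) * x) / (1 - θ * x) ^ 2

theorem dirkStability_eq_Rre (θ x : ℝ) : dirkStability θ x = Rre θ x := by
  simp only [dirkStability, Rre, Ring.inverse_eq_inv, smul_eq_mul, inv_pow, div_eq_inv_mul]

theorem Rre_eq_one_add_mul_dirkSlope {θ x : ℝ} (hθx : θ * x < 1) :
    Rre θ x = 1 + x * dirkSlope θ x := by
  have : 1 - θ * x ≠ 0 := (sub_pos.2 hθx).ne'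
  rw [Rre, dirkSlope]
  field_simp
  ring

theorem Rre_sub_one_div_eq_dirkSlope {θ x : ℝ} (hx : x ≠ 0) (hθx : θ * x < 1) :
    (Rre θ x - 1) / x = dirkSlope θ x := by
  rw [Rre_eq_one_add_mul_dirkSlope hθx, add_sub_cancel_left, mul_div_cancel_left₀ _ hx]

theorem monotoneOn_dirkSlope {θ : ℝ} (hθ : θ ∈ Set.Icc (1 / 4 : ℝ) (1 / 2)) :
    MonotoneOn (dirkSlope θ) {x | θ * x < 1} := by
  intro x hx y hy hxy
  obtain ⟨hθ₁, hθ₂⟩ := hθ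
  have hx' : 0 < 1 - θ * x := sub_pos.2 hx
  have hy' : 0 < 1 - θ * y := sub_pos.2 hy
  rw [dirkSlope, dirkSlope, div_le_div_iff₀ (by positivity) (by positivity), ← sub_nonneg]
  have hfactor : (1 + (1 / 2 - 2 * θ) * y) * (1 - θ * x) ^ 2
        - (1 + (1 / 2 - 2 * θ) * x) * (1 - θ * y) ^ 2 =
      (y - x) * ((1 / 2 - θ) * ((1 - θ * x) + (1 - θ * y))
        + (2 * θ - 1 / 2) * ((1 - θ * x) * (1 - θ * y))) := by
    ring
  rw [hfactor]
  have : 0 ≤ y - x := sub_nonneg.2 hxy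
  have : 0 ≤ 1 / 2 - θ := sub_nonneg.2 hθ₂
  have : 0 ≤ 2 * θ - 1 / 2 := by linarith
  positivity

theorem one_le_dirkSlope {θ x : ℝ} (hθ : θ ∈ Set.Icc (1 / 4 : ℝ) (1 / 2)) (hx : 0 ≤ x)
    (hθx : θ * x < 1) : 1 ≤ dirkSlope θ x := by
  simpa [dirkSlope] using monotoneOn_dirkSlope hθ (by simp : (0 : ℝ) ∈ {x | θ * x < 1}) hθx hx

theorem Rre_nonneg {θ x : ℝ} (hθ : θ ∈ Set.Icc (1 / 4 : ℝ) (1 / 2)) (hx : 0 ≤ x)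
    (hθx : θ * x < 1) : 0 ≤ Rre θ x := by
  have := zero_le_one.trans (one_le_dirkSlope hθ hx hθx)
  rw [Rre_eq_one_add_mul_dirkSlope hθx]
  positivity

theorem Rre_le_one_add_dirkSlope_mul {θ x ν : ℝ} (hθ : θ ∈ Set.Icc (1 / 4 : ℝ) (1 / 2))
    (hx : 0 ≤ x) (hxν : x ≤ ν) (hθν : θ * ν < 1) : Rre θ x ≤ 1 + dirkSlope θ ν * x := by
  have hθx : θ * x < 1 := (mul_le_mul_of_nonneg_left hxν (by linarith [hθ.1])).trans_lt hθν
  rw [Rre_eq_one_add_mul_dirkSlope hθx, mul_comm x]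
  gcongr
  exact monotoneOn_dirkSlope hθ hθx hθν hxν

theorem cayleyCoeff₁_nonneg {θ r : ℝ} (hθ : θ ∈ Set.Icc (1 / 4 : ℝ) (1 / 2)) (hr : 1 ≤ r) :
    0 ≤ cayleyCoeff₁ θ r := by
  have hfactor : cayleyCoeff₁ θ r =
      r * ((θ - 1 / 4) + (1 / 2 - θ) * (r - 1) / 2) := by
    rw [cayleyCoeff₁]; ring
  have : 0 ≤ (1 / 2 - θ) * (r - 1) := mul_nonneg (sub_nonneg.2 hθ.2) (sub_nonneg.2 hr)
  rw [hfactor]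
  exact mul_nonneg (by linarith) (by linarith [hθ.1])

theorem cayleyCoeff₂_nonneg {θ : ℝ} (hθ : θ ≤ 1 / 2) (r : ℝ) : 0 ≤ cayleyCoeff₂ θ r :=
  mul_nonneg (sub_nonneg.2 hθ) (sq_nonneg _)

/- In `α = θ - 1/4`, `β = 1/2 - θ` and `s = r - 1` all coefficients are nonnegative. -/
theorem cayleyCoeff_mul_add_four_mul_nonneg {θ r : ℝ} (hθ : θ ∈ Set.Icc (1 / 4 : ℝ) (1 / 2))
    (hr : 1 ≤ r) :
    0 ≤ cayleyCoeff₁ θ r * (cayleyCoeff₀ θ r + cayleyCoeff₂ θ r)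
      + 4 * cayleyCoeff₀ θ r * cayleyCoeff₂ θ r := by
  obtain ⟨α, hα⟩ : ∃ α, α = θ - 1 / 4 := ⟨_, rfl⟩
  obtain ⟨β, hβ⟩ : ∃ β, β = 1 / 2 - θ := ⟨_, rfl⟩
  obtain ⟨s, hs⟩ : ∃ s, s = r - 1 := ⟨_, rfl⟩
  have hα₀ : 0 ≤ α := hα ▸ sub_nonneg.2 hθ.1
  have hβ₀ : 0 ≤ β := hβ ▸ sub_nonneg.2 hθ.2
  have hs₀ : 0 ≤ s := hs ▸ sub_nonneg.2 hr
  have hexpand : cayleyCoeff₁ θ r * (cayleyCoeff₀ θ r + cayleyCoeff₂ θ r)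
        + 4 * cayleyCoeff₀ θ r * cayleyCoeff₂ θ r =
      (1 + s) * (s * (α ^ 2 + α * β * (5 / 4 + α) + β ^ 3 / 2)
        + s ^ 2 * (2 * α * β + β ^ 2 / 2) + s ^ 3 * (β ^ 2 / 2)) := by
    rw [cayleyCoeff₀, cayleyCoeff₁, cayleyCoeff₂, hα, hβ, hs]
    ring
  rw [hexpand]
  positivity

theorem cayleyCoeff_sum {θ x : ℝ} (hθx : θ * x ≠ 1) :
    cayleyCoeff₀ θ (1 - θ * x)⁻¹ + cayleyCoeff₁ θ (1 - θ * x)⁻¹ + cayleyCoeff₂ θ (1 - θ * x)⁻¹ =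
      θ ^ 2 * Rre θ x := by
  have hunit : IsUnit (1 - θ • x) := (sub_ne_zero.2 hθx.symm).isUnit
  have hcayley := dirkResolventPoly_smul_one_add θ (1 - θ * x)⁻¹ (1 : ℝ)
  have hone : ((1 - θ * x)⁻¹ / 2) • (1 + 1 : ℝ) = Ring.inverse (1 - θ • x) := by
    rw [Ring.inverse_eq_inv, smul_eq_mul, smul_eq_mul]; ring
  rw [hone, ← sq_smul_dirkStability hunit, dirkStability_eq_Rre] at hcayley
  simpa using hcayley.symm

theorem one_add_mul_pow_le_exp {k t T : ℝ} (hk : 0 ≤ k) (ht : 0 ≤ t) {n : ℕ} (hn : n * t ≤ T) :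
    (1 + k * t) ^ n ≤ Real.exp (k * T) :=
  calc (1 + k * t) ^ n ≤ Real.exp (k * t) ^ n := by
        gcongr
        rw [add_comm]
        exact Real.add_one_le_exp _
    _ = Real.exp (k * (n * t)) := by rw [← Real.exp_nat_mul]; ring_nf
    _ ≤ Real.exp (k * T) := by gcongr

end Scalar

section Stability

variable {E : Type*} [NormedAddCommGroup E] [InnerProductSpace ℝ E] [CompleteSpace E]

theorem LogNormLE.norm_dirkStability_le {A : E →L[ℝ] E} {θ x : ℝ} (hA : LogNormLE A x)
    (hθ : θ ∈ Set.Icc (1 / 4 : ℝ) (1 / 2)) (hx : 0 ≤ x) (hθx : θ * x < 1) :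
    ‖dirkStability θ A‖ ≤ Rre θ x := by
  have hθ₀ : 0 < θ := by linarith [hθ.1]
  have hf : 0 < 1 - θ * x := sub_pos.2 hθx
  have hunit := hA.isUnit_one_sub_smul hθ₀.le hθx
  set r := (1 - θ * x)⁻¹ with hr
  have hr₁ : 1 ≤ r := (one_le_inv₀ hf).2 (sub_le_self _ (by positivity))
  set U := (2 * (1 - θ * x)) • Ring.inverse (1 - θ • A) - 1 with hU
  have hU₁ : ‖U‖ ≤ 1 := norm_smul_inverse_sub_one_le hunit hf.le (hA.le_inner_one_sub_smul hθ₀.le)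
  have hresolvent : Ring.inverse (1 - θ • A) = (r / 2) • (1 + U) := by
    have hscale : r / 2 * (2 * (1 - θ * x)) = 1 := by rw [hr]; field_simp
    rw [hU, add_sub_cancel, smul_smul, hscale, one_smul]
  have hscaled : θ ^ 2 * ‖dirkStability θ A‖ ≤ θ ^ 2 * Rre θ x :=
    calc θ ^ 2 * ‖dirkStability θ A‖
        = ‖θ ^ 2 • dirkStability θ A‖ := (norm_smul_of_nonneg (sq_nonneg θ) _).symm
      _ = ‖cayleyCoeff₀ θ r • (1 : E →L[ℝ] E) + cayleyCoeff₁ θ r • U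
            + cayleyCoeff₂ θ r • U ^ 2‖ := by
          rw [sq_smul_dirkStability hunit, hresolvent, dirkResolventPoly_smul_one_add]
      _ ≤ |cayleyCoeff₀ θ r + cayleyCoeff₁ θ r + cayleyCoeff₂ θ r| :=
          norm_quadratic_le_of_norm_le_one hU₁ (cayleyCoeff₁_nonneg hθ hr₁)
            (cayleyCoeff₂_nonneg hθ.2 r) (cayleyCoeff_mul_add_four_mul_nonneg hθ hr₁)
      _ = θ ^ 2 * Rre θ x := by
          rw [cayleyCoeff_sum hθx.ne,
            abs_of_nonneg (mul_nonneg (sq_nonneg θ) (Rre_nonneg hθ hx hθx))]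
  exact le_of_mul_le_mul_left hscaled (by positivity)

theorem dirk_l2_stability_general {θ ν c Δt T : ℝ} (hθ : θ ∈ Set.Icc (1 / 4 : ℝ) (1 / 2))
    (hν : ν ∈ Set.Ioo 0 (1 / θ)) {M : E →L[ℝ] E} (hM : LogNormLE M c) (hΔt : 0 ≤ Δt)
    (hc : c * Δt ≤ ν) :
    IsUnit (1 - θ • (Δt • M)) ∧
    ∀ n : ℕ, (n : ℝ) * Δt ≤ T →
      ‖dirkStability θ (Δt • M) ^ n‖ ≤ (1 + ((Rre θ ν - 1) / ν) * Δt * max c 0) ^ n ∧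
      (1 + ((Rre θ ν - 1) / ν) * Δt * max c 0) ^ n
        ≤ Real.exp (((Rre θ ν - 1) / ν) * T * max c 0) := by
  have hθ₀ : 0 < θ := by linarith [hθ.1]
  have hθν : θ * ν < 1 := by simpa [mul_comm] using (lt_div_iff₀ hθ₀).1 hν.2
  have hx : 0 ≤ Δt * max c 0 := by positivity
  have hxν : Δt * max c 0 ≤ ν := by
    rw [mul_max_of_nonneg _ _ hΔt, mul_zero, mul_comm]
    exact max_le hc hν.1.le
  have hθx : θ * (Δt * max c 0) < 1 := (mul_le_mul_of_nonneg_left hxν hθ₀.le).trans_lt hθν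
  have hA : LogNormLE (Δt • M) (Δt * max c 0) := (hM.mono (le_max_left c 0)).smul hΔt
  rw [Rre_sub_one_div_eq_dirkSlope hν.1.ne' hθν]
  have hγ : 0 ≤ dirkSlope θ ν := zero_le_one.trans (one_le_dirkSlope hθ hν.1.le hθν)
  refine ⟨hA.isUnit_one_sub_smul hθ₀.le hθx, fun n hn ↦ ⟨norm_pow_le_pow_of_norm_le ?_ n, ?_⟩⟩
  · rw [mul_assoc]
    exact (hA.norm_dirkStability_le hθ hx hθx).trans
      (Rre_le_one_add_dirkSlope_mul hθ hx hxν hθν)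
  · rw [mul_right_comm, mul_right_comm _ T]
    exact one_add_mul_pow_le_exp (mul_nonneg hγ (le_max_right c 0)) hΔt hn

end Stability

section EuclideanSpace

variable {n : Type*} [Fintype n]

theorem l2norm_eq_norm_toLp (v : n → ℝ) : l2norm v = ‖WithLp.toLp 2 v‖ := by
  simp [l2norm, EuclideanSpace.norm_eq]

variable [DecidableEq n]

theorem l2norm_mulVec_le (A : Matrix n n ℝ) (v : n → ℝ) :
    l2norm (A *ᵥ v) ≤ ‖toEuclideanCLM (𝕜 := ℝ) A‖ * l2norm v := by
  rw [l2norm_eq_norm_toLp, l2norm_eq_norm_toLp, ← toEuclideanCLM_toLp]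
  exact ContinuousLinearMap.le_opNorm _ _

theorem logNormLE_toEuclideanCLM {A : Matrix n n ℝ} {c : ℝ}
    (hA : ∀ v : n → ℝ, (A *ᵥ v) ⬝ᵥ v ≤ c * (v ⬝ᵥ v)) :
    LogNormLE (toEuclideanCLM (𝕜 := ℝ) A) c := fun v ↦ by
  rw [real_inner_comm, inner_toEuclideanCLM, dotProduct_comm, EuclideanSpace.real_norm_sq_eq]
  simpa [dotProduct, pow_two] using hA v.ofLp

theorem toEuclideanCLM_dirkStability {θ : ℝ} {A : Matrix n n ℝ} (hA : IsUnit (1 - θ • A)) :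
    toEuclideanCLM (𝕜 := ℝ) (dirkStability θ A) = dirkStability θ (toEuclideanCLM (𝕜 := ℝ) A) :=
  map_dirkStability (toEuclideanCLM (n := n) (𝕜 := ℝ)).toAlgEquiv.toAlgHom hA

theorem dirkStability_smul_matrix (θ t : ℝ) (A : Matrix n n ℝ) :
    dirkStability θ (t • A) = ((1 - (θ * t) • A)⁻¹) ^ 2
      * (1 + ((1 - 2 * θ) * t) • A + (1 / 2 - 2 * θ + θ ^ 2) • (t • A) ^ 2) := by
  rw [dirkStability, nonsing_inv_eq_ringInverse, smul_smul, smul_smul]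

end EuclideanSpace

/-- Let θ ∈ [1/4, 1/2], ν ∈ (0, 1/θ), and γ = (R_θ(ν) − 1)/ν.  Let
M be a real N×N matrix and c ∈ ℝ with μ₂[M] ≤ c, and let Δt > 0 satisfy cΔt ≤ ν.
Then I − θΔtM is invertible and the DIRK amplification matrix
R_θ(ΔtM) = (I − θΔtM)⁻²(I + (1−2θ)ΔtM + (1/2 − 2θ + θ²)(ΔtM)²) satisfies
‖R_θ(ΔtM)ⁿ‖₂ ≤ (1 + γΔt c⁺)ⁿ ≤ e^{γT c⁺} for every n ≥ 0 with nΔt ≤ T. -/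
theorem dirk_l2_stability
    (θ : ℝ) (hθ : θ ∈ Set.Icc (1/4 : ℝ) (1/2))
    (ν : ℝ) (hν : ν ∈ Set.Ioo (0 : ℝ) (1/θ))
    (N : ℕ) (M : Matrix (Fin N) (Fin N) ℝ) (c : ℝ)
    (hM : ∀ v : Fin N → ℝ, (M.mulVec v) ⬝ᵥ v ≤ c * (v ⬝ᵥ v))
    (Δt : ℝ) (hΔt : 0 < Δt) (hc : c * Δt ≤ ν) (T : ℝ) :
    IsUnit (1 - (θ * Δt) • M) ∧
    ∀ n : ℕ, (n : ℝ) * Δt ≤ T → ∀ v : Fin N → ℝ,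
      l2norm (((((1 - (θ * Δt) • M)⁻¹) ^ 2
          * (1 + ((1 - 2*θ) * Δt) • M + (1/2 - 2*θ + θ^2) • ((Δt • M) ^ 2))) ^ n).mulVec v)
        ≤ (1 + ((Rre θ ν - 1)/ν) * Δt * (max c 0))^n * l2norm v ∧
      (1 + ((Rre θ ν - 1)/ν) * Δt * (max c 0))^n * l2norm v
        ≤ Real.exp (((Rre θ ν - 1)/ν) * T * (max c 0)) * l2norm v := by
  obtain ⟨hunit, hbound⟩ :=
    dirk_l2_stability_general (T := T) hθ hν (logNormLE_toEuclideanCLM hM) hΔt.le hc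
  have hunitM : IsUnit (1 - θ • (Δt • M)) :=
    (MulEquiv.isUnit_map (toEuclideanCLM (n := Fin N) (𝕜 := ℝ))).1 (by simpa using hunit)
  refine ⟨by rwa [smul_smul] at hunitM, fun n hn v ↦ ?_⟩
  obtain ⟨hpow, hexp⟩ := hbound n hn
  have hl : 0 ≤ l2norm v := Real.sqrt_nonneg _
  rw [← map_smul, ← toEuclideanCLM_dirkStability hunitM, ← map_pow] at hpow
  rw [← dirkStability_smul_matrix]
  exact ⟨(l2norm_mulVec_le _ v).trans (by gcongr), by gcongr⟩
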